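/- Let X be a measurable space, let μ be a measure on X, let ν₁ and ν₂ be measures on X with ν₁ ≤ μ and ν₂ ≤ μ, let f, g : X → ℝ ∪ {−∞} be measurable, and let δ > 0 and M ∈ ℝ. Then ν₁({f < g − δ}) + ν₂({g < f − δ}) ≤ μ({f < M}) + μ({g < M}) + (1/δ)·∫_X |max(f, M) − max(g, M)| dμ. -/

import Mathlib

open MeasureTheory

/-!
Off `{f < M}`, the inequality `f < g - δ` passes to the truncations `F = max f M` and
`G = max g M`, so the left-hand side is at most `μ {f < M} + μ {g < M}` plus the measures of
`{F + δ < G}` and `{G + δ < F}`. These two sets partition `{δ < |F - G|}`, so a single application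
of Chebyshev's inequality bounds both of them by one integral over `X`.
-/

/-- The truncation from below `max a M` of an extended real `a` at a real level `M`, as a real
number. It is meant for `a ≠ ⊤`; its value at `⊤` is the junk value `0`. -/
noncomputable def truncBelow (M : ℝ) (a : EReal) : ℝ := (max a (M : EReal)).toReal

theorem measurable_truncBelow (M : ℝ) : Measurable (truncBelow M) :=
  (measurable_id.max measurable_const).ereal_toReal

theorem truncBelow_coe (M a : ℝ) : truncBelow M a = max a M := by
  rw [truncBelow, ← EReal.coe_strictMono.monotone.map_max, EReal.toReal_coe]

theorem truncBelow_add_lt_truncBelow {M δ : ℝ} {a b : EReal} (hMa : (M : EReal) ≤ a) (hb : b ≠ ⊤)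
    (hab : a < b - (δ : EReal)) : truncBelow M a + δ < truncBelow M b := by
  have ha_bot : a ≠ ⊥ := ((EReal.bot_lt_coe M).trans_le hMa).ne'
  have hb_bot : b ≠ ⊥ := by
    rintro rfl
    simp at hab
  lift a to ℝ using ⟨hab.ne_top, ha_bot⟩
  lift b to ℝ using ⟨hb, hb_bot⟩
  norm_cast at hMa hab
  calc truncBelow M a + δ = a + δ := by rw [truncBelow_coe, max_eq_left hMa]
    _ < b := lt_sub_iff_add_lt.mp hab
    _ ≤ truncBelow M b := (le_max_left b M).trans_eq (truncBelow_coe M b).symm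

theorem measure_lt_sub_le_measure_lt_add_measure_truncBelow {X : Type*} [MeasurableSpace X]
    (μ : Measure X) (f : X → EReal) {g : X → EReal} (hg : ∀ x, g x ≠ ⊤) (δ M : ℝ) :
    μ {x | f x < g x - (δ : EReal)} ≤
      μ {x | f x < (M : EReal)} + μ {x | truncBelow M (f x) + δ < truncBelow M (g x)} := by
  refine (measure_mono fun x hx => ?_).trans (measure_union_le _ _)
  exact (lt_or_ge (f x) M).imp_right fun hMf => truncBelow_add_lt_truncBelow hMf (hg x) hx

section RealValued

variable {X : Type*} [MeasurableSpace X] {μ : Measure X} {δ : ℝ}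

theorem measure_add_lt_add_measure_add_lt {F G : X → ℝ} (hF : AEMeasurable F μ)
    (hG : AEMeasurable G μ) (hδ : 0 ≤ δ) :
    μ {x | F x + δ < G x} + μ {x | G x + δ < F x} = μ {x | δ < |F x - G x|} := by
  have hdisj : Disjoint {x | F x + δ < G x} {x | G x + δ < F x} := by
    refine Set.disjoint_left.mpr fun x (hFG : F x + δ < G x) (hGF : G x + δ < F x) => ?_
    linarith
  have hunion : {x | F x + δ < G x} ∪ {x | G x + δ < F x} = {x | δ < |F x - G x|} := by
    ext x
    change F x + δ < G x ∨ G x + δ < F x ↔ δ < |F x - G x|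
    rw [abs_sub_comm, lt_abs, neg_sub, lt_sub_iff_add_lt', lt_sub_iff_add_lt']
  rw [← measure_union₀ (nullMeasurableSet_lt (hG.add_const δ) hF) hdisj.aedisjoint, hunion]

theorem measure_ge_le_ofReal_one_div_mul_lintegral {h : X → ℝ} (hh : AEMeasurable h μ)
    (hδ : 0 < δ) :
    μ {x | δ ≤ h x} ≤ ENNReal.ofReal (1 / δ) * ∫⁻ x, ENNReal.ofReal (h x) ∂μ := by
  calc μ {x | δ ≤ h x} ≤ μ {x | ENNReal.ofReal δ ≤ ENNReal.ofReal (h x)} :=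
        measure_mono fun _ hx => ENNReal.ofReal_le_ofReal hx
    _ ≤ (∫⁻ x, ENNReal.ofReal (h x) ∂μ) / ENNReal.ofReal δ :=
        meas_ge_le_lintegral_div hh.ennreal_ofReal (ENNReal.ofReal_pos.mpr hδ).ne'
          ENNReal.ofReal_ne_top
    _ = ENNReal.ofReal (1 / δ) * ∫⁻ x, ENNReal.ofReal (h x) ∂μ := by
        rw [one_div, ENNReal.ofReal_inv_of_pos hδ, ENNReal.div_eq_inv_mul]

theorem measure_add_lt_add_measure_add_lt_le_lintegral {F G : X → ℝ} (hF : AEMeasurable F μ)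
    (hG : AEMeasurable G μ) (hδ : 0 < δ) :
    μ {x | F x + δ < G x} + μ {x | G x + δ < F x} ≤
      ENNReal.ofReal (1 / δ) * ∫⁻ x, ENNReal.ofReal |F x - G x| ∂μ := by
  rw [measure_add_lt_add_measure_add_lt hF hG hδ.le]
  calc μ {x | δ < |F x - G x|} ≤ μ {x | δ ≤ |F x - G x|} :=
        measure_mono fun x (hx : δ < |F x - G x|) => hx.le
    _ ≤ _ := measure_ge_le_ofReal_one_div_mul_lintegral (hF.sub hG).abs hδ

end RealValued

/-- Two-sided truncation–Chebyshev estimate (inequality (**) in the proof of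
Theorem 3.10): if `ν₁ ≤ μ` and `ν₂ ≤ μ`, then for measurable
`f, g : X → ℝ ∪ {−∞}`, `δ > 0` and `M ∈ ℝ`,
`ν₁({f < g − δ}) + ν₂({g < f − δ})
  ≤ μ({f < M}) + μ({g < M}) + (1/δ) ∫ |max(f,M) − max(g,M)| dμ`. -/
theorem stmt_2 {X : Type*} [MeasurableSpace X]
    (μ ν₁ ν₂ : Measure X) (hν₁ : ν₁ ≤ μ) (hν₂ : ν₂ ≤ μ)
    (f g : X → EReal) (hf : Measurable f) (hg : Measurable g)
    (hf' : ∀ x, f x ≠ ⊤) (hg' : ∀ x, g x ≠ ⊤)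
    (δ : ℝ) (hδ : 0 < δ) (M : ℝ) :
    ν₁ {x | f x < g x - (δ : EReal)} + ν₂ {x | g x < f x - (δ : EReal)} ≤
      μ {x | f x < (M : EReal)} + μ {x | g x < (M : EReal)} +
        ENNReal.ofReal (1 / δ) *
          ∫⁻ x, ENNReal.ofReal
            |(max (f x) (M : EReal)).toReal - (max (g x) (M : EReal)).toReal| ∂μ := by
  have hF : AEMeasurable (fun x => truncBelow M (f x)) μ :=
    ((measurable_truncBelow M).comp hf).aemeasurable
  have hG : AEMeasurable (fun x => truncBelow M (g x)) μ :=
    ((measurable_truncBelow M).comp hg).aemeasurable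
  calc ν₁ {x | f x < g x - (δ : EReal)} + ν₂ {x | g x < f x - (δ : EReal)}
      ≤ μ {x | f x < g x - (δ : EReal)} + μ {x | g x < f x - (δ : EReal)} :=
        add_le_add (hν₁ _) (hν₂ _)
    _ ≤ (μ {x | f x < (M : EReal)} + μ {x | truncBelow M (f x) + δ < truncBelow M (g x)}) +
          (μ {x | g x < (M : EReal)} + μ {x | truncBelow M (g x) + δ < truncBelow M (f x)}) :=
        add_le_add (measure_lt_sub_le_measure_lt_add_measure_truncBelow μ f hg' δ M)
          (measure_lt_sub_le_measure_lt_add_measure_truncBelow μ g hf' δ M)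
    _ = μ {x | f x < (M : EReal)} + μ {x | g x < (M : EReal)} +
          (μ {x | truncBelow M (f x) + δ < truncBelow M (g x)} +
            μ {x | truncBelow M (g x) + δ < truncBelow M (f x)}) := add_add_add_comm _ _ _ _
    _ ≤ _ := add_le_add_right (measure_add_lt_add_measure_add_lt_le_lintegral hF hG hδ) _
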